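/- Fractional integral inverts the Caputo derivative: let α ∈ (0,1), T > 0, let φ : [0,T] → ℝ be integrable, let c ∈ ℝ, and suppose there is an integrable function g : [0,T] → ℝ such that I^{1−α}(φ − c)(t) = ∫₀ᵗ g(s) ds for every t ∈ [0,T] (i.e. I^{1−α}(φ − c) is absolutely continuous with derivative g, so g is the Caputo fractional derivative of φ of order α with initial value c). Then I^α g(t) = φ(t) − c for almost every t ∈ [0,T]. -/

import Mathlib

/-!
The semigroup law `I^a (I^b ψ) = I^(a+b) ψ` for `a + b ≥ 1` holds at *every* point of `[0,T]`, by
Fubini's theorem and the Beta integral: the condition `a + b ≥ 1` makes the iterated kernel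
`(t-τ)^(a+b-1)` bounded (`fracInt_semigroup`). Writing `u = φ - c`, the hypothesis says
`I^(1-α) u = I^1 g` on `[0,T]`; applying `I^α` gives
`I^1 u = I^α (I^(1-α) u) = I^α (I^1 g) = I^(α+1) g = I^1 (I^α g)` on `[0,T]`.
So `u` and `I^α g` are integrable functions with the same primitive, hence agree almost everywhere
by the Lebesgue differentiation theorem.
-/

open MeasureTheory

/-- The Riemann–Liouville fractional integral
`I^α ψ (t) = (1/Γ(α)) ∫₀ᵗ (t−τ)^{α−1} ψ(τ) dτ`. -/
noncomputable def fracInt (α : ℝ) (ψ : ℝ → ℝ) (t : ℝ) : ℝ :=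
  (1 / Real.Gamma α) * ∫ τ in (0 : ℝ)..t, (t - τ) ^ (α - 1) * ψ τ

/-- The Beta integral transported to `[τ, t]`. -/
lemma integral_beta_kernel {a b : ℝ} (ha : 0 < a) (hb : 0 < b) {τ t : ℝ} (h : τ < t) :
    ∫ s in τ..t, (t - s) ^ (a - 1) * (s - τ) ^ (b - 1) =
      Real.Gamma a * Real.Gamma b / Real.Gamma (a + b) * (t - τ) ^ (a + b - 1) := by
  have h0 : 0 < t - τ := sub_pos.2 h
  have e1 : ∫ s in τ..t, (t - s) ^ (a - 1) * (s - τ) ^ (b - 1) =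
      ∫ x in (0 : ℝ)..(t - τ), x ^ (b - 1) * (t - τ - x) ^ (a - 1) := by
    have := intervalIntegral.integral_comp_sub_right (a := τ) (b := t)
      (fun x : ℝ => x ^ (b - 1) * (t - τ - x) ^ (a - 1)) τ
    rw [sub_self] at this
    rw [← this]
    congr 1
    ext s
    rw [mul_comm, sub_sub_sub_cancel_right]
  rw [e1]
  apply Complex.ofReal_injective
  have hB := Complex.betaIntegral_scaled (b : ℂ) (a : ℂ) h0
  have hG := Complex.Gamma_mul_Gamma_eq_betaIntegral (s := (b : ℂ)) (t := (a : ℂ))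
    (by simpa using hb) (by simpa using ha)
  have hne : Complex.Gamma ((b : ℂ) + a) ≠ 0 := by
    apply Complex.Gamma_ne_zero_of_re_pos
    simp only [Complex.add_re, Complex.ofReal_re]
    positivity
  rw [← intervalIntegral.integral_ofReal]
  have e2 : ∫ x in (0 : ℝ)..(t - τ), ((x ^ (b - 1) * (t - τ - x) ^ (a - 1) : ℝ) : ℂ) =
      ∫ x in (0 : ℝ)..(t - τ),
        (x : ℂ) ^ ((b : ℂ) - 1) * (((t - τ : ℝ) : ℂ) - x) ^ ((a : ℂ) - 1) := by
    apply intervalIntegral.integral_congr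
    intro x hx
    rw [Set.uIcc_of_le h0.le] at hx
    have h1 : 0 ≤ t - τ - x := sub_nonneg.2 hx.2
    simp only
    rw [Complex.ofReal_mul, Complex.ofReal_cpow hx.1, Complex.ofReal_cpow h1]
    push_cast
    rfl
  rw [e2, hB, Complex.ofReal_mul, Complex.ofReal_cpow h0.le, Complex.ofReal_div,
    Complex.ofReal_mul, ← Complex.Gamma_ofReal, ← Complex.Gamma_ofReal, ← Complex.Gamma_ofReal,
    mul_comm (Complex.Gamma a), Complex.ofReal_add, add_comm (a : ℂ) b, hG,
    mul_div_cancel_left₀ _ hne, mul_comm]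
  push_cast
  rw [add_comm (a : ℂ) b]

lemma intervalIntegrable_beta_kernel {a b : ℝ} (ha : 0 < a) (hb : 0 < b) {τ t : ℝ} (h : τ < t) :
    IntervalIntegrable (fun s => (t - s) ^ (a - 1) * (s - τ) ^ (b - 1)) volume τ t := by
  -- A function with nonzero Bochner integral is integrable.
  apply intervalIntegral.intervalIntegrable_of_integral_ne_zero
  rw [integral_beta_kernel ha hb h]
  have h0 : 0 < t - τ := sub_pos.2 h
  have := Real.Gamma_pos_of_pos ha
  have := Real.Gamma_pos_of_pos hb
  have := Real.Gamma_pos_of_pos (add_pos ha hb)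
  positivity

/-- The integrand of the double integral `Γ(a) Γ(b) I^a (I^b ψ) (t)`, extended by zero from the
triangle `τ ≤ s` to the whole square. -/
noncomputable def fracKernel (a b t : ℝ) (ψ : ℝ → ℝ) (p : ℝ × ℝ) : ℝ :=
  (t - p.1) ^ (a - 1) * (Set.Ici (0 : ℝ)).indicator (fun x => x ^ (b - 1)) (p.1 - p.2) * ψ p.2

lemma fracKernel_eq_indicator_left (a b t : ℝ) (ψ : ℝ → ℝ) (τ : ℝ) :
    (fun s => fracKernel a b t ψ (s, τ)) =
      (Set.Ici τ).indicator (fun s => (t - s) ^ (a - 1) * (s - τ) ^ (b - 1) * ψ τ) := by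
  ext s
  by_cases h : τ ≤ s <;> simp [fracKernel, Set.indicator, h]

lemma fracKernel_eq_indicator_right (a b t : ℝ) (ψ : ℝ → ℝ) (s : ℝ) :
    (fun τ => fracKernel a b t ψ (s, τ)) =
      (Set.Iic s).indicator (fun τ => (t - s) ^ (a - 1) * ((s - τ) ^ (b - 1) * ψ τ)) := by
  ext τ
  by_cases h : τ ≤ s <;> simp [fracKernel, Set.indicator, h, mul_assoc]

lemma integrable_fracKernel_left {a b : ℝ} (ha : 0 < a) (hb : 0 < b) {τ t : ℝ} (h0 : 0 < τ)
    (h : τ < t) (ψ : ℝ → ℝ) :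
    IntegrableOn (fun s => fracKernel a b t ψ (s, τ)) (Set.Ioc 0 t) := by
  have hI : Set.Ioc 0 t ∩ Set.Ici τ = Set.Icc τ t := by ext; simp; grind
  have hi := (intervalIntegrable_beta_kernel ha hb h).mul_const (ψ τ)
  rw [intervalIntegrable_iff_integrableOn_Icc_of_le h.le] at hi
  rw [fracKernel_eq_indicator_left, IntegrableOn, integrable_indicator_iff measurableSet_Ici,
    IntegrableOn, Measure.restrict_restrict measurableSet_Ici, Set.inter_comm, hI]
  exact hi

lemma integral_fracKernel_left {a b : ℝ} (ha : 0 < a) (hb : 0 < b) {τ t : ℝ} (h0 : 0 < τ)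
    (h : τ < t) (ψ : ℝ → ℝ) :
    ∫ s in Set.Ioc 0 t, fracKernel a b t ψ (s, τ) =
      Real.Gamma a * Real.Gamma b / Real.Gamma (a + b) * ((t - τ) ^ (a + b - 1) * ψ τ) := by
  have hI : Set.Ioc 0 t ∩ Set.Ici τ = Set.Icc τ t := by ext; simp; grind
  rw [fracKernel_eq_indicator_left, setIntegral_indicator measurableSet_Ici, hI,
    integral_Icc_eq_integral_Ioc, ← intervalIntegral.integral_of_le h.le,
    intervalIntegral.integral_mul_const, integral_beta_kernel ha hb h, mul_assoc]

lemma integral_fracKernel_right {a b : ℝ} (hb : 0 < b) {s t : ℝ} (hs : s ∈ Set.Ioc 0 t)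
    (ψ : ℝ → ℝ) :
    ∫ τ in Set.Ioc 0 t, fracKernel a b t ψ (s, τ) =
      Real.Gamma b * ((t - s) ^ (a - 1) * fracInt b ψ s) := by
  have hI : Set.Ioc 0 t ∩ Set.Iic s = Set.Ioc 0 s := by
    ext; simp only [Set.mem_inter_iff, Set.mem_Ioc, Set.mem_Iic] at hs ⊢; grind
  have hG := (Real.Gamma_pos_of_pos hb).ne'
  rw [fracKernel_eq_indicator_right, setIntegral_indicator measurableSet_Iic, hI,
    ← intervalIntegral.integral_of_le hs.1.le, intervalIntegral.integral_const_mul, fracInt]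
  field_simp

lemma norm_fracKernel {a b t : ℝ} (ψ : ℝ → ℝ) {s : ℝ} (hs : s ≤ t) (τ : ℝ) :
    ‖fracKernel a b t ψ (s, τ)‖ = fracKernel a b t (fun x => ‖ψ x‖) (s, τ) := by
  have h1 : 0 ≤ (t - s) ^ (a - 1) := Real.rpow_nonneg (sub_nonneg.2 hs) _
  have h2 : 0 ≤ (Set.Ici (0 : ℝ)).indicator (fun x => x ^ (b - 1)) (s - τ) :=
    Set.indicator_nonneg (fun x hx => Real.rpow_nonneg hx _) _
  simp only [fracKernel, norm_mul, Real.norm_of_nonneg h1, Real.norm_of_nonneg h2]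

lemma ae_restrict_Ioc_lt (t : ℝ) : ∀ᵐ τ ∂(volume.restrict (Set.Ioc 0 t)), 0 < τ ∧ τ < t := by
  rw [← restrict_Ioo_eq_restrict_Ioc]
  exact ae_restrict_mem measurableSet_Ioo

/-- Tonelli's theorem for the double integral: integrating in `s` first leaves
`‖ψ τ‖` times the factor `(t - τ) ^ (a + b - 1)`, which is bounded because `a + b ≥ 1`. -/
lemma integrable_fracKernel {a b t : ℝ} (ha : 0 < a) (hb : 0 < b) (hab : 1 ≤ a + b) {ψ : ℝ → ℝ}
    (hψ : IntegrableOn ψ (Set.Ioc 0 t)) :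
    Integrable (fracKernel a b t ψ)
      ((volume.restrict (Set.Ioc 0 t)).prod (volume.restrict (Set.Ioc 0 t))) := by
  have hm : AEStronglyMeasurable (fracKernel a b t ψ)
      ((volume.restrict (Set.Ioc 0 t)).prod (volume.restrict (Set.Ioc 0 t))) := by
    have h1 : Measurable fun p : ℝ × ℝ => (t - p.1) ^ (a - 1) *
        (Set.Ici (0 : ℝ)).indicator (fun x => x ^ (b - 1)) (p.1 - p.2) := by
      have h2 : Measurable ((Set.Ici (0 : ℝ)).indicator (fun x : ℝ => x ^ (b - 1))) :=
        Measurable.indicator (by fun_prop) measurableSet_Ici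
      exact Measurable.mul (by fun_prop) (h2.comp (by fun_prop))
    exact h1.aestronglyMeasurable.mul hψ.aestronglyMeasurable.comp_snd
  rw [integrable_prod_iff' hm]
  constructor
  · filter_upwards [ae_restrict_Ioc_lt t] with τ hτ
    exact integrable_fracKernel_left ha hb hτ.1 hτ.2 ψ
  · have hb' : Integrable (fun τ => Real.Gamma a * Real.Gamma b / Real.Gamma (a + b) *
        ((t - τ) ^ (a + b - 1) * ‖ψ τ‖)) (volume.restrict (Set.Ioc 0 t)) := by
      refine Integrable.const_mul ?_ _
      refine hψ.norm.bdd_mul (c := t ^ (a + b - 1))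
        (Measurable.aestronglyMeasurable (by fun_prop)) ?_
      filter_upwards [ae_restrict_Ioc_lt t] with τ hτ
      have h0 : 0 ≤ t - τ := by linarith [hτ.2]
      rw [Real.norm_of_nonneg (Real.rpow_nonneg h0 _)]
      exact Real.rpow_le_rpow h0 (by linarith [hτ.1]) (by linarith)
    refine hb'.congr ?_
    filter_upwards [ae_restrict_Ioc_lt t] with τ hτ
    refine (integral_fracKernel_left ha hb hτ.1 hτ.2 (fun x => ‖ψ x‖)).symm.trans ?_
    refine setIntegral_congr_fun measurableSet_Ioc fun s hs => ?_
    exact (norm_fracKernel ψ hs.2 τ).symm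

/-- The semigroup law, valid at every point (not just almost everywhere) since `a + b ≥ 1`. -/
lemma fracInt_semigroup {a b t : ℝ} (ha : 0 < a) (hb : 0 < b) (hab : 1 ≤ a + b) (ht : 0 ≤ t)
    {ψ : ℝ → ℝ} (hψ : IntegrableOn ψ (Set.Ioc 0 t)) :
    fracInt a (fracInt b ψ) t = fracInt (a + b) ψ t := by
  have hGa := (Real.Gamma_pos_of_pos ha).ne'
  have hGb := (Real.Gamma_pos_of_pos hb).ne'
  have hGab := (Real.Gamma_pos_of_pos (add_pos ha hb)).ne'
  have hswap := integral_integral_swap (f := fun s τ => fracKernel a b t ψ (s, τ))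
    (integrable_fracKernel ha hb hab hψ)
  have hl : ∫ s in Set.Ioc 0 t, ∫ τ in Set.Ioc 0 t, fracKernel a b t ψ (s, τ) =
      Real.Gamma b * ∫ s in (0 : ℝ)..t, (t - s) ^ (a - 1) * fracInt b ψ s := by
    rw [intervalIntegral.integral_of_le ht, ← integral_const_mul]
    exact setIntegral_congr_fun measurableSet_Ioc fun s hs => integral_fracKernel_right hb hs ψ
  have hr : ∫ τ in Set.Ioc 0 t, ∫ s in Set.Ioc 0 t, fracKernel a b t ψ (s, τ) =
      Real.Gamma a * Real.Gamma b / Real.Gamma (a + b) *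
        ∫ τ in (0 : ℝ)..t, (t - τ) ^ (a + b - 1) * ψ τ := by
    rw [intervalIntegral.integral_of_le ht, ← integral_const_mul]
    refine integral_congr_ae ?_
    filter_upwards [ae_restrict_Ioc_lt t] with τ hτ
    exact integral_fracKernel_left ha hb hτ.1 hτ.2 ψ
  rw [hl, hr] at hswap
  have h2 : ∫ s in (0 : ℝ)..t, (t - s) ^ (a - 1) * fracInt b ψ s =
      Real.Gamma a / Real.Gamma (a + b) * ∫ τ in (0 : ℝ)..t, (t - τ) ^ (a + b - 1) * ψ τ := by
    apply mul_left_cancel₀ hGb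
    rw [hswap]
    ring
  rw [fracInt, h2, fracInt]
  field_simp

lemma fracInt_one (ψ : ℝ → ℝ) (t : ℝ) : fracInt 1 ψ t = ∫ s in (0 : ℝ)..t, ψ s := by
  simp [fracInt]

lemma integrableOn_fracInt {b t : ℝ} (hb : 0 < b) {ψ : ℝ → ℝ}
    (hψ : IntegrableOn ψ (Set.Ioc 0 t)) : IntegrableOn (fracInt b ψ) (Set.Ioc 0 t) := by
  have h := (integrable_fracKernel (a := 1) one_pos hb (by linarith) hψ).integral_prod_left
  refine (h.const_mul (Real.Gamma b)⁻¹).congr ?_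
  filter_upwards [ae_restrict_mem measurableSet_Ioc] with s hs
  rw [integral_fracKernel_right hb hs]
  have := (Real.Gamma_pos_of_pos hb).ne'
  simp only [sub_self, Real.rpow_zero, one_mul]
  field_simp

lemma fracInt_congr {a t : ℝ} (ht : 0 ≤ t) {f g : ℝ → ℝ} (h : ∀ s ∈ Set.Icc 0 t, f s = g s) :
    fracInt a f t = fracInt a g t := by
  unfold fracInt
  congr 1
  refine intervalIntegral.integral_congr fun s hs => ?_
  rw [Set.uIcc_of_le ht] at hs
  simp only [h s hs]

/-- **Fractional integral inverts the Caputo derivative.**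
Let `α ∈ (0,1)`, let `φ` be integrable on `[0,T]` and suppose `g` is integrable with
`I^{1−α}(φ − c)(t) = ∫₀ᵗ g(s) ds` for every `t ∈ [0,T]` (so `g` is the Caputo
fractional derivative of `φ` of order `α` with initial value `c`).
Then `I^α g(t) = φ(t) − c` for almost every `t ∈ [0,T]`. -/
theorem fracInt_inverts_caputo (α T : ℝ) (hα0 : 0 < α) (hα1 : α < 1) (hT : 0 < T)
    (φ g : ℝ → ℝ) (c : ℝ)
    (hφ : IntegrableOn φ (Set.Icc 0 T))
    (hg : IntegrableOn g (Set.Icc 0 T))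
    (hcaputo : ∀ t ∈ Set.Icc (0 : ℝ) T,
      fracInt (1 - α) (fun s => φ s - c) t = ∫ s in (0 : ℝ)..t, g s) :
    ∀ᵐ t ∂(volume.restrict (Set.Icc (0 : ℝ) T)), fracInt α g t = φ t - c := by
  have hu : IntegrableOn (fun s => φ s - c) (Set.Ioc 0 T) :=
    (hφ.mono_set Set.Ioc_subset_Icc_self).sub (integrableOn_const (by simp))
  have hg' : IntegrableOn g (Set.Ioc 0 T) := hg.mono_set Set.Ioc_subset_Icc_self
  have hIg := integrableOn_fracInt hα0 hg'
  have key : ∀ t ∈ Set.Icc (0 : ℝ) T,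
      ∫ s in (0 : ℝ)..t, fracInt α g s = ∫ s in (0 : ℝ)..t, (φ s - c) := by
    intro t ht
    have hsub : Set.Ioc 0 t ⊆ Set.Ioc 0 T := Set.Ioc_subset_Ioc_right ht.2
    have hgt := hg'.mono_set hsub
    calc ∫ s in (0 : ℝ)..t, fracInt α g s
        = fracInt 1 (fracInt α g) t := (fracInt_one _ _).symm
      _ = fracInt (1 + α) g t := fracInt_semigroup one_pos hα0 (by linarith) ht.1 hgt
      _ = fracInt (α + 1) g t := by rw [add_comm]
      _ = fracInt α (fracInt 1 g) t :=
          (fracInt_semigroup hα0 one_pos (by linarith) ht.1 hgt).symm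
      _ = fracInt α (fracInt (1 - α) (fun s => φ s - c)) t := by
          refine fracInt_congr ht.1 fun s hs => ?_
          rw [fracInt_one, hcaputo s ⟨hs.1, hs.2.trans ht.2⟩]
      _ = fracInt (α + (1 - α)) (fun s => φ s - c) t :=
          fracInt_semigroup hα0 (by linarith) (by linarith) ht.1 (hu.mono_set hsub)
      _ = ∫ s in (0 : ℝ)..t, (φ s - c) := by rw [add_sub_cancel, fracInt_one]
  rw [← restrict_Ioo_eq_restrict_Icc, ae_restrict_iff' measurableSet_Ioo]
  filter_upwards [((intervalIntegrable_iff_integrableOn_Ioc_of_le hT.le).2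
      hIg).ae_hasDerivAt_integral, ((intervalIntegrable_iff_integrableOn_Ioc_of_le hT.le).2
      hu).ae_hasDerivAt_integral] with t h1 h2 ht
  rw [Set.uIcc_of_le hT.le] at h1 h2
  have htc := Set.Ioo_subset_Icc_self ht
  have h0 : (0 : ℝ) ∈ Set.Icc 0 T := ⟨le_rfl, hT.le⟩
  refine (h1 htc 0 h0).unique ((h2 htc 0 h0).congr_of_eventuallyEq ?_)
  filter_upwards [Ioo_mem_nhds ht.1 ht.2] with x hx
  exact key x (Set.Ioo_subset_Icc_self hx)
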